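/- Let p = q ≥ 4 and n = p + q. Every tree T ∈ 𝒯_n^{p,q} that is isomorphic to none of B_{p,q}^{0,0}, B_{p,q}^{0,1}, B_{p,q}^{2,0}, B_{p,q}^{0,2} satisfies T ≺_s B_{p,q}^{0,2}; that is, for p = q ≥ 4 the tree B_{p,q}^{0,2} is the unique fourth last tree in the S-order among 𝒯_n^{p,q}. -/

import Mathlib

open SimpleGraph

open scoped Classical in
/-- The adjacency matrix of a simple graph, with real entries. -/
noncomputable def adjMat {V : Type*} [Fintype V] (G : SimpleGraph V) : Matrix V V ℝ :=
  Matrix.of fun a b => if G.Adj a b then 1 else 0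

/-- The `k`-th spectral moment `S_k(G) = tr(A(G)^k)`. -/
noncomputable def spectralMoment {V : Type*} [Fintype V] [DecidableEq V]
    (G : SimpleGraph V) (k : ℕ) : ℝ :=
  Matrix.trace (adjMat G ^ k)

/-- `SLt G₁ G₂` means `G₁ ≺_s G₂`: for some `k` with `1 ≤ k ≤ n - 1`,
`S_i(G₁) = S_i(G₂)` for all `i < k` and `S_k(G₁) < S_k(G₂)`. -/
def SLt {V : Type*} [Fintype V] [DecidableEq V] (G₁ G₂ : SimpleGraph V) : Prop :=
  ∃ k : ℕ, 1 ≤ k ∧ k ≤ Fintype.card V - 1 ∧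
    (∀ i < k, spectralMoment G₁ i = spectralMoment G₂ i) ∧
    spectralMoment G₁ k < spectralMoment G₂ k

/-- The tree `B_{p,q}^{k,l}` on `p + q` vertices: vertex `0 = u` is adjacent to `1 = v`
and to the `q - 1` vertices `2, …, q`; the distinguished neighbor `2` of `u` carries the
`k` pendant leaves `q+1, …, q+k`; the `l` neighbors `3, …, l+2` of `u` carry one pendant
leaf each (`q+k+j` is attached to `j+2` for `1 ≤ j ≤ l`); and `v` carries the
`p - k - l - 1` pendant leaves `q+k+l+1, …, p+q-1`. -/
def BTree (p q k l : ℕ) : SimpleGraph (Fin (p + q)) :=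
  SimpleGraph.fromRel (fun a b =>
    (a.val = 0 ∧ b.val = 1) ∨
    (a.val = 0 ∧ 2 ≤ b.val ∧ b.val ≤ q) ∨
    (a.val = 2 ∧ q + 1 ≤ b.val ∧ b.val ≤ q + k) ∨
    (q + k + 1 ≤ b.val ∧ b.val ≤ q + k + l ∧ a.val = b.val - (q + k) + 2) ∨
    (a.val = 1 ∧ q + k + l + 1 ≤ b.val))

/-- The tree `D_{p,q}^{k,l}` on `p + q` vertices: vertex `1 = v` is adjacent to `0 = u`
and to the `p - 1` vertices `2, …, p`; the distinguished neighbor `2` of `v` carries the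
`k` pendant leaves `p+1, …, p+k`; the `l` neighbors `3, …, l+2` of `v` carry one pendant
leaf each; and `u` carries the `q - k - l - 1` pendant leaves `p+k+l+1, …, p+q-1`. -/
def DTree (p q k l : ℕ) : SimpleGraph (Fin (p + q)) :=
  SimpleGraph.fromRel (fun a b =>
    (a.val = 0 ∧ b.val = 1) ∨
    (a.val = 1 ∧ 2 ≤ b.val ∧ b.val ≤ p) ∨
    (a.val = 2 ∧ p + 1 ≤ b.val ∧ b.val ≤ p + k) ∨
    (p + k + 1 ≤ b.val ∧ b.val ≤ p + k + l ∧ a.val = b.val - (p + k) + 2) ∨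
    (a.val = 0 ∧ p + k + l + 1 ≤ b.val))

/-- `T ∈ 𝒯_{p+q}^{p,q}`: `T` is a tree on `p + q` vertices with a `(p,q)`-bipartition. -/
def TreeBip (p q : ℕ) (G : SimpleGraph (Fin (p + q))) : Prop :=
  G.IsTree ∧ ∃ A : Finset (Fin (p + q)), A.card = p ∧
    ∀ ⦃x y : Fin (p + q)⦄, G.Adj x y → (x ∈ A ↔ y ∉ A)

/-- If every label occurs in `s` at most as often as in `t`, then
there is a label-preserving map from `s` to `t` that is injective on `s`. -/
lemma exists_injOn_of_card_fiber_le {α β γ : Type*} [DecidableEq γ] [Nonempty β]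
    (s : Finset α) (t : Finset β) (f : α → γ) (g : β → γ)
    (h : ∀ i, (s.filter (f · = i)).card ≤ (t.filter (g · = i)).card) :
    ∃ τ : α → β, (∀ x ∈ s, τ x ∈ t ∧ g (τ x) = f x) ∧ Set.InjOn τ s := by
  have key : ∀ i, ∃ τ : α → β,
      (∀ x ∈ s.filter (f · = i), τ x ∈ t.filter (g · = i)) ∧
        Set.InjOn τ (s.filter (f · = i) : Finset α) := fun i => by
    have hle : ((s.filter (f · = i) : Finset α) : Set α).encard
        ≤ ((t.filter (g · = i) : Finset β) : Set β).encard := by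
      rw [Set.encard_coe_eq_coe_finsetCard, Set.encard_coe_eq_coe_finsetCard]
      exact_mod_cast h i
    exact (Finset.finite_toSet _).exists_injOn_of_encard_le hle
  choose τ hτ hinj using key
  refine ⟨fun x => τ (f x) x, fun x hx => ?_, fun x hx y hy hxy => ?_⟩
  · simpa using hτ (f x) x (by simpa using hx)
  · have h1 : τ (f x) x ∈ t ∧ g (τ (f x) x) = f x := by
      simpa using hτ (f x) x (by simpa using hx)
    have h2 : τ (f y) y ∈ t ∧ g (τ (f y) y) = f y := by
      simpa using hτ (f y) y (by simpa using hy)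
    have hf : f x = f y := by rw [← h1.2, ← h2.2]; exact congrArg g hxy
    refine hinj (f x) (by simpa using hx) (by simpa [hf] using hy) ?_
    simpa [hf] using hxy

/-- `G` is the tree of height at most two with root `u` and parent function `f`. -/
structure IsHeightTwo {V : Type*} (G : SimpleGraph V) (u : V) (f : V → V) : Prop where
  root : f u = u
  height : ∀ x, f (f x) = u
  adj_iff : ∀ x y, G.Adj x y ↔ x ≠ y ∧ (f x = y ∨ f y = x)

/-- The children of the root. -/
def rootChildren {V : Type*} [Fintype V] [DecidableEq V] (u : V) (f : V → V) : Finset V :=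
  Finset.univ.filter fun x => x ≠ u ∧ f x = u

/-- The number of vertices with parent `b`. -/
def childCount {V : Type*} [Fintype V] [DecidableEq V] (f : V → V) (b : V) : ℕ :=
  (Finset.univ.filter fun x => f x = b).card

namespace IsHeightTwo

variable {V W : Type*} [Fintype V] [Fintype W] [DecidableEq V] [DecidableEq W]
  {G : SimpleGraph V} {H : SimpleGraph W} {u : V} {f : V → V} {w : W} {g : W → W}

lemma nonempty_iso (hG : IsHeightTwo G u f) (hH : IsHeightTwo H w g)
    (hcard : Fintype.card V = Fintype.card W)
    (hM : (rootChildren u f).val.map (childCount f) = (rootChildren w g).val.map (childCount g)) :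
    Nonempty (G ≃g H) := by
  have : Nonempty W := ⟨w⟩
  obtain ⟨σ, hσ, hσi⟩ := exists_injOn_of_card_fiber_le (rootChildren u f) (rootChildren w g)
    (childCount f) (childCount g) (fun i => by
      have := congrArg (Multiset.count i) hM
      simp only [Multiset.count_map] at this
      simp only [Finset.card, Finset.filter_val, eq_comm (b := i)]
      exact this.le)
  have hBf : ∀ {x}, f x ≠ u → f x ∈ rootChildren u f := fun {x} hx => by
    simp [rootChildren, hx, hG.height]
  obtain ⟨η, hη, hηi⟩ := exists_injOn_of_card_fiber_le
    (Finset.univ.filter fun x => f x ≠ u) (Finset.univ.filter fun x => g x ≠ w)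
    (fun x => σ (f x)) g (fun i => by
      by_cases hi : ∃ b ∈ rootChildren u f, σ b = i
      · obtain ⟨b, hb, rfl⟩ := hi
        have hbu : b ≠ u := by simp [rootChildren] at hb; exact hb.1
        have hσu : σ b ≠ w := by have := (hσ b hb).1; simp [rootChildren] at this; exact this.1
        have e1 : ((Finset.univ.filter fun x => f x ≠ u).filter fun x => σ (f x) = σ b)
            = Finset.univ.filter fun x => f x = b := by
          ext x
          simp only [Finset.mem_filter, Finset.mem_univ, true_and]
          constructor
          · rintro ⟨h1, h2⟩
            exact hσi (hBf h1) hb h2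
          · rintro rfl
            exact ⟨hbu, rfl⟩
        have e2 : ((Finset.univ.filter fun x => g x ≠ w).filter fun x => g x = σ b)
            = Finset.univ.filter fun x => g x = σ b := by
          ext x
          simp only [Finset.mem_filter, Finset.mem_univ, true_and]
          exact ⟨fun h => h.2, fun h => ⟨h ▸ hσu, h⟩⟩
        rw [e1, e2]
        exact (hσ b hb).2.ge
      · rw [Finset.card_eq_zero.2]
        · exact Nat.zero_le _
        · simp only [Finset.filter_eq_empty_iff, Finset.mem_filter, Finset.mem_univ, true_and]
          exact fun x hx h => hi ⟨_, hBf hx, h⟩)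
  simp only [Finset.mem_filter, Finset.mem_univ, true_and] at hη
  simp only [rootChildren, Finset.mem_filter, Finset.mem_univ, true_and] at hσ
  let φ : V → W := fun x => if x = u then w else if f x = u then σ x else η x
  have φu : φ u = w := by simp [φ]
  have φB : ∀ x, x ≠ u → f x = u → φ x = σ x := fun x h1 h2 => by simp [φ, h1, h2]
  have φL : ∀ x, f x ≠ u → φ x = η x := fun x h => by
    have : x ≠ u := by rintro rfl; exact h hG.root
    simp [φ, h, this]
  have hcomm : ∀ x, g (φ x) = φ (f x) := fun x => by
    by_cases h1 : x = u
    · subst h1; rw [hG.root, φu, hH.root]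
    by_cases h2 : f x = u
    · rw [φB x h1 h2, h2, φu, (hσ x ⟨h1, h2⟩).1.2]
    · rw [φL x h2, φB _ h2 (hG.height x), (hη x h2).2]
  have hw : ∀ x, φ x = w → x = u := fun x hx => by
    by_contra h1
    by_cases h2 : f x = u
    · exact (hσ x ⟨h1, h2⟩).1.1 (by rw [← φB x h1 h2, hx])
    · exact (hη x h2).1 (by rw [← φL x h2, hx, hH.root])
  have hinj : Function.Injective φ := fun x y hxy => by
    have hf : φ (f x) = φ (f y) := by rw [← hcomm, ← hcomm, hxy]
    have hfu : f x = u ↔ f y = u :=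
      ⟨fun h => hw _ (by rw [← hf, h, φu]), fun h => hw _ (by rw [hf, h, φu])⟩
    by_cases h1 : x = u
    · subst h1; exact (hw y (by rw [← hxy, φu])).symm
    have h1' : y ≠ u := fun h => h1 (hw x (by rw [hxy, h, φu]))
    by_cases h2 : f x = u
    · rw [φB x h1 h2, φB y h1' (hfu.1 h2)] at hxy
      exact hσi (by simp [rootChildren, h1, h2]) (by simp [rootChildren, h1', hfu.1 h2]) hxy
    · have h2' : f y ≠ u := fun h => h2 (hfu.2 h)
      rw [φL x h2, φL y h2'] at hxy
      exact hηi (by simpa using h2) (by simpa using h2') hxy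
  have hbij : Function.Bijective φ := (Fintype.bijective_iff_injective_and_card φ).2 ⟨hinj, hcard⟩
  refine ⟨⟨Equiv.ofBijective φ hbij, fun {x y} => ?_⟩⟩
  simp only [Equiv.ofBijective_apply]
  rw [hG.adj_iff, hH.adj_iff, hcomm, hcomm, hinj.eq_iff, hinj.eq_iff, hinj.ne_iff]

end IsHeightTwo

/-- Distinct vertices of a forest have at most one common neighbour. -/
lemma SimpleGraph.IsAcyclic.common_neighbor_unique {V : Type*} {G : SimpleGraph V}
    (hG : G.IsAcyclic) {x y z w : V} (hxy : x ≠ y) (h1 : G.Adj x z) (h2 : G.Adj z y)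
    (h3 : G.Adj x w) (h4 : G.Adj w y) : z = w := by
  have hp : ∀ {z} (h1 : G.Adj x z) (h2 : G.Adj z y),
      (Walk.cons h1 (Walk.cons h2 Walk.nil)).IsPath := fun h1 h2 => by
    simp [hxy, h1.ne, h2.ne]
  have := congrArg (fun p : G.Path x y => p.1.support)
    ((hG.subsingleton_path x y).elim ⟨_, hp h1 h2⟩ ⟨_, hp h3 h4⟩)
  simpa using this

section Moments

variable {V : Type*} [Fintype V] {G : SimpleGraph V}

lemma adjMat_apply_of_adj {x y : V} (h : G.Adj x y) : adjMat G x y = 1 := by simp [adjMat, h]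

lemma adjMat_apply_of_not_adj {x y : V} (h : ¬ G.Adj x y) : adjMat G x y = 0 := by simp [adjMat, h]

lemma adjMat_comm (x y : V) : adjMat G x y = adjMat G y x := by
  by_cases h : G.Adj x y <;> simp [adjMat, h, G.adj_comm y x]

lemma sum_adjMat_apply [DecidableRel G.Adj] (x : V) : ∑ y, adjMat G x y = G.degree x := by
  rw [← G.card_neighborFinset_eq_degree, Finset.card_eq_sum_ones,
    Nat.cast_sum, neighborFinset_eq_filter, Finset.sum_filter]
  refine Finset.sum_congr rfl fun z _ => ?_
  by_cases h : G.Adj x z <;> simp [adjMat, h]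

variable [DecidableEq V]

lemma spectralMoment_zero : spectralMoment G 0 = Fintype.card V := by simp [spectralMoment]

/-- Odd spectral moments of a bipartite graph vanish. -/
lemma spectralMoment_odd {C : Finset V} (hC : ∀ ⦃x y⦄, G.Adj x y → (x ∈ C ↔ y ∉ C))
    {k : ℕ} (hk : Odd k) : spectralMoment G k = 0 := by
  let s : V → ℝ := fun x => if x ∈ C then 1 else -1
  have hA : ∀ x y, adjMat G x y * s y = -(s x * adjMat G x y) := fun x y => by
    by_cases h : G.Adj x y
    · have := hC h
      by_cases hy : y ∈ C <;> simp_all [s]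
    · simp [adjMat_apply_of_not_adj h]
  have key : ∀ k x y, (adjMat G ^ k) x y * s y = (-1) ^ k * (s x * (adjMat G ^ k) x y) := by
    intro k
    induction k with
    | zero =>
      intro x y
      by_cases h : x = y
      · subst h; simp
      · simp [h]
    | succ k ih =>
      intro x y
      rw [pow_succ, Matrix.mul_apply, Finset.sum_mul, Finset.mul_sum, Finset.mul_sum]
      refine Finset.sum_congr rfl fun z _ => ?_
      rw [mul_assoc, hA, mul_neg, ← mul_assoc, ih, pow_succ]
      ring
  refine Finset.sum_eq_zero fun x _ => ?_
  have h := key k x x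
  rw [hk.neg_one_pow] at h
  have hs : s x ≠ 0 := by by_cases hx : x ∈ C <;> simp [s, hx]
  have : (adjMat G ^ k) x x * s x = 0 := by linarith
  simpa [hs] using this

/-- Positive spectral moments of a bipartite graph, computed from one colour class. -/
lemma spectralMoment_succ_eq_two_mul {C : Finset V} (hC : ∀ ⦃x y⦄, G.Adj x y → (x ∈ C ↔ y ∉ C))
    (k : ℕ) : spectralMoment G (k + 1) = 2 * ∑ x ∈ C, (adjMat G ^ (k + 1)) x x := by
  have h1 : ∑ x ∈ C, (adjMat G ^ (k + 1)) x x
      = ∑ x ∈ C, ∑ z ∈ Cᶜ, adjMat G x z * (adjMat G ^ k) z x := by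
    refine Finset.sum_congr rfl fun x hx => ?_
    rw [pow_succ', Matrix.mul_apply]
    refine (Finset.sum_subset (Finset.subset_univ _) fun z _ hz => ?_).symm
    rw [adjMat_apply_of_not_adj, zero_mul]
    intro h
    have := hC h
    simp_all
  have h2 : ∑ z ∈ Cᶜ, (adjMat G ^ (k + 1)) z z
      = ∑ z ∈ Cᶜ, ∑ x ∈ C, adjMat G x z * (adjMat G ^ k) z x := by
    refine Finset.sum_congr rfl fun z hz => ?_
    rw [pow_succ, Matrix.mul_apply]
    refine (Finset.sum_subset (Finset.subset_univ C) fun x _ hx => ?_).symm.trans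
      (Finset.sum_congr rfl fun x _ => mul_comm _ _)
    rw [adjMat_apply_of_not_adj, mul_zero]
    intro h
    have := hC h
    simp_all
  rw [Finset.sum_comm, ← h1] at h2
  rw [spectralMoment, Matrix.trace, ← Finset.sum_add_sum_compl C]
  simp only [Matrix.diag_apply]
  rw [h2]
  ring

lemma adjMat_sq_apply_self [DecidableRel G.Adj] (x : V) : (adjMat G ^ 2) x x = G.degree x := by
  rw [sq, Matrix.mul_apply, ← G.card_neighborFinset_eq_degree, Finset.card_eq_sum_ones,
    Nat.cast_sum, neighborFinset_eq_filter, Finset.sum_filter]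
  refine Finset.sum_congr rfl fun z _ => ?_
  by_cases h : G.Adj x z <;> simp [adjMat, h, G.adj_comm z x]

lemma spectralMoment_two [DecidableRel G.Adj] :
    spectralMoment G 2 = ∑ x, (G.degree x : ℝ) := by
  simp [spectralMoment, Matrix.trace, adjMat_sq_apply_self]

lemma SimpleGraph.IsAcyclic.adjMat_sq_apply_mul_self (hG : G.IsAcyclic) {x y : V} (hxy : x ≠ y) :
    (adjMat G ^ 2) x y * (adjMat G ^ 2) x y = (adjMat G ^ 2) x y := by
  by_cases h : ∃ z, G.Adj x z ∧ G.Adj z y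
  · obtain ⟨z, h1, h2⟩ := h
    have : (adjMat G ^ 2) x y = 1 := by
      rw [sq, Matrix.mul_apply, Finset.sum_eq_single z]
      · rw [adjMat_apply_of_adj h1, adjMat_apply_of_adj h2, one_mul]
      · intro w _ hw
        by_cases h3 : G.Adj x w
        · rw [adjMat_apply_of_not_adj (x := w), mul_zero]
          exact fun h4 => hw (hG.common_neighbor_unique hxy h3 h4 h1 h2)
        · rw [adjMat_apply_of_not_adj h3, zero_mul]
      · simp
    rw [this, one_mul]
  · have : (adjMat G ^ 2) x y = 0 := by
      rw [sq, Matrix.mul_apply]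
      refine Finset.sum_eq_zero fun z _ => ?_
      by_cases h1 : G.Adj x z
      · rw [adjMat_apply_of_not_adj fun h2 => h ⟨z, h1, h2⟩, mul_zero]
      · rw [adjMat_apply_of_not_adj h1, zero_mul]
    rw [this, zero_mul]

/-- The fourth spectral moment of a forest in terms of its degrees. -/
lemma SimpleGraph.IsAcyclic.spectralMoment_four [DecidableRel G.Adj] (hG : G.IsAcyclic) :
    spectralMoment G 4 = 2 * ∑ x, (G.degree x : ℝ) ^ 2 - ∑ x, (G.degree x : ℝ) := by
  have hsymm : ∀ x y, (adjMat G ^ 2) x y = (adjMat G ^ 2) y x := fun x y => by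
    rw [sq, Matrix.mul_apply, Matrix.mul_apply]
    exact Finset.sum_congr rfl fun z _ => by
      rw [adjMat_comm x, adjMat_comm z y, mul_comm]
  have hrow : ∑ x, ∑ y, (adjMat G ^ 2) x y = ∑ z, (G.degree z : ℝ) ^ 2 := by
    have : ∀ x y, (adjMat G ^ 2) x y = ∑ z, adjMat G z x * adjMat G z y := fun x y => by
      rw [sq, Matrix.mul_apply]
      exact Finset.sum_congr rfl fun z _ => by rw [adjMat_comm x]
    simp only [this]
    rw [Finset.sum_congr rfl fun x _ => Finset.sum_comm, Finset.sum_comm]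
    refine Finset.sum_congr rfl fun z _ => ?_
    rw [sq, ← sum_adjMat_apply, Finset.sum_mul_sum]
  have h4 : ∀ x, (adjMat G ^ 4) x x
      = ∑ y, (adjMat G ^ 2) x y + ((G.degree x : ℝ) ^ 2 - G.degree x) := fun x => by
    rw [show (4 : ℕ) = 2 + 2 from rfl, pow_add, Matrix.mul_apply,
      ← Finset.add_sum_erase _ _ (Finset.mem_univ x),
      ← Finset.add_sum_erase (a := x) (f := fun y => (adjMat G ^ 2) x y) _ (Finset.mem_univ x),
      Finset.sum_congr rfl (g := fun y => (adjMat G ^ 2) x y), adjMat_sq_apply_self]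
    · ring
    · intro y hy
      rw [hsymm y x]
      exact hG.adjMat_sq_apply_mul_self (Finset.ne_of_mem_erase hy).symm
  rw [spectralMoment, Matrix.trace,
    Finset.sum_congr rfl (fun x _ => (Matrix.diag_apply _ x).trans (h4 x)),
    Finset.sum_add_distrib, hrow, Finset.sum_sub_distrib]
  ring

end Moments

namespace IsHeightTwo

variable {V : Type*} [Fintype V] [DecidableEq V] {G : SimpleGraph V} {u : V} {f : V → V}

lemma mem_rootChildren_iff (hG : IsHeightTwo G u f) ⦃x y : V⦄ (h : G.Adj x y) :
    x ∈ rootChildren u f ↔ y ∉ rootChildren u f := by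
  have h1 := hG.root
  have h2 := hG.height x
  have h3 := hG.height y
  rw [hG.adj_iff] at h
  simp only [rootChildren, Finset.mem_filter, Finset.mem_univ, true_and]
  grind

lemma adjMat_sq_apply (hG : IsHeightTwo G u f) {b : V} (hb : b ∈ rootChildren u f) (y : V) :
    (adjMat G ^ 2) b y = if y ∈ rootChildren u f then
      1 + (if b = y then (childCount f b : ℝ) else 0) else 0 := by
  rw [sq, Matrix.mul_apply]
  split_ifs with hy hby
  · subst hby
    have : ∀ z, adjMat G b z * adjMat G z b =
        (if z = u then 1 else 0) + if f z = b then 1 else 0 := by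
      intro z
      have h1 := hG.root
      have h2 := hG.height z
      have h3 := hG.adj_iff b z
      simp only [rootChildren, Finset.mem_filter, Finset.mem_univ, true_and] at hb
      simp only [adjMat, Matrix.of_apply, G.adj_comm z b, h3]
      grind
    simp only [this, Finset.sum_add_distrib]
    simp [childCount]
  · have : ∀ z, adjMat G b z * adjMat G z y = if z = u then 1 else 0 := by
      intro z
      have h1 := hG.root
      have h2 := hG.height z
      have h3 := hG.adj_iff b z
      have h4 := hG.adj_iff z y
      simp only [rootChildren, Finset.mem_filter, Finset.mem_univ, true_and] at hb hy
      simp only [adjMat, Matrix.of_apply, h3, h4]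
      grind
    simp [this]
  · refine Finset.sum_eq_zero fun z _ => ?_
    by_cases h1 : G.Adj b z
    · rw [adjMat_apply_of_not_adj (x := z), mul_zero]
      intro h2
      have := hG.mem_rootChildren_iff h1
      have := hG.mem_rootChildren_iff h2
      tauto
    · rw [adjMat_apply_of_not_adj h1, zero_mul]

lemma adjMat_pow_four_apply (hG : IsHeightTwo G u f) {b y : V} (hb : b ∈ rootChildren u f)
    (hy : y ∈ rootChildren u f) :
    (adjMat G ^ 4) b y = (rootChildren u f).card + childCount f b + childCount f y
      + if b = y then (childCount f b : ℝ) ^ 2 else 0 := by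
  rw [show (4 : ℕ) = 2 + 2 from rfl, pow_add, Matrix.mul_apply,
    ← Finset.sum_subset (Finset.subset_univ (rootChildren u f)) (fun z _ hz => by
      rw [hG.adjMat_sq_apply hb, if_neg hz, zero_mul]),
    Finset.sum_congr rfl (g := fun z => 1 + (if b = z then (childCount f b : ℝ) else 0)
      + (if z = y then (childCount f y : ℝ) else 0)
      + (if b = z then (if b = y then (childCount f b : ℝ) ^ 2 else 0) else 0)) (fun z hz => by
      rw [hG.adjMat_sq_apply hb, hG.adjMat_sq_apply hz, if_pos hz, if_pos hy]
      split_ifs <;> simp_all; ring)]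
  simp [Finset.sum_add_distrib, hb, hy]

lemma adjMat_pow_six_apply_self (hG : IsHeightTwo G u f) {b : V} (hb : b ∈ rootChildren u f) :
    (adjMat G ^ 6) b b = (rootChildren u f).card ^ 2
      + 2 * (rootChildren u f).card * childCount f b
      + ∑ z ∈ rootChildren u f, (childCount f z : ℝ)
      + 3 * (childCount f b : ℝ) ^ 2 + (childCount f b : ℝ) ^ 3 := by
  rw [show (6 : ℕ) = 2 + 4 from rfl, pow_add, Matrix.mul_apply,
    ← Finset.sum_subset (Finset.subset_univ (rootChildren u f)) (fun z _ hz => by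
      rw [hG.adjMat_sq_apply hb, if_neg hz, zero_mul]),
    Finset.sum_congr rfl (g := fun z => ((rootChildren u f).card + (childCount f b : ℝ))
      + childCount f z + (if b = z then (childCount f b : ℝ) ^ 2
        + childCount f b * ((rootChildren u f).card + 2 * childCount f b
          + (childCount f b : ℝ) ^ 2) else 0)) (fun z hz => by
      rw [hG.adjMat_sq_apply hb, hG.adjMat_pow_four_apply hz hb, if_pos hz]
      by_cases h : b = z
      · subst h
        simp only [if_true]
        ring
      · rw [if_neg h, if_neg (Ne.symm h), if_neg h]
        ring)]
  simp [Finset.sum_add_distrib, hb]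
  ring

lemma spectralMoment_two (hG : IsHeightTwo G u f) : spectralMoment G 2
    = 2 * ((rootChildren u f).card + ∑ b ∈ rootChildren u f, (childCount f b : ℝ)) := by
  rw [spectralMoment_succ_eq_two_mul hG.mem_rootChildren_iff,
    Finset.sum_congr rfl fun b hb => hG.adjMat_sq_apply hb b]
  simp [Finset.sum_add_distrib, Finset.sum_ite_mem]

lemma spectralMoment_four (hG : IsHeightTwo G u f) : spectralMoment G 4
    = 2 * ((rootChildren u f).card ^ 2 + 2 * ∑ b ∈ rootChildren u f, (childCount f b : ℝ)
      + ∑ b ∈ rootChildren u f, (childCount f b : ℝ) ^ 2) := by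
  rw [spectralMoment_succ_eq_two_mul hG.mem_rootChildren_iff,
    Finset.sum_congr rfl fun b hb => hG.adjMat_pow_four_apply hb hb]
  simp [Finset.sum_add_distrib]
  ring

lemma spectralMoment_six (hG : IsHeightTwo G u f) : spectralMoment G 6
    = 2 * ((rootChildren u f).card ^ 3
      + 3 * (rootChildren u f).card * ∑ b ∈ rootChildren u f, (childCount f b : ℝ)
      + 3 * ∑ b ∈ rootChildren u f, (childCount f b : ℝ) ^ 2
      + ∑ b ∈ rootChildren u f, (childCount f b : ℝ) ^ 3) := by
  rw [spectralMoment_succ_eq_two_mul hG.mem_rootChildren_iff,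
    Finset.sum_congr rfl fun b hb => hG.adjMat_pow_six_apply_self hb]
  simp [Finset.sum_add_distrib, ← Finset.mul_sum]
  ring

end IsHeightTwo

section Partitions

variable {α : Type*} {s : Finset α} {e : α → ℕ}

lemma map_val_eq_replicate (h : ∀ b ∈ s, e b = 0) : s.val.map e = Multiset.replicate s.card 0 := by
  rw [Multiset.map_congr rfl h, Multiset.map_const']
  rfl

lemma sum_sq_le_sq_sum (s : Finset α) (e : α → ℕ) : ∑ x ∈ s, e x ^ 2 ≤ (∑ x ∈ s, e x) ^ 2 := by
  rw [sq, Finset.sum_mul]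
  refine Finset.sum_le_sum fun x hx => ?_
  rw [sq]
  exact Nat.mul_le_mul_left _ (Finset.single_le_sum (f := e) (fun _ _ => Nat.zero_le _) hx)

lemma exists_pos_of_sum_pos (h : 0 < ∑ x ∈ s, e x) : ∃ b ∈ s, 0 < e b := by
  by_contra! h'
  have := Finset.sum_eq_zero (s := s) (f := e) (fun x hx => by have := h' x hx; omega)
  omega

variable [DecidableEq α]

lemma map_val_eq_cons {b : α} (hb : b ∈ s) :
    s.val.map e = e b ::ₘ (s.erase b).val.map e := by
  rw [← Multiset.map_cons, Finset.erase_val, Multiset.cons_erase hb]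

lemma map_val_eq_of_one {a : α} (ha : a ∈ s) (h : ∀ x ∈ s, x ≠ a → e x = 0) :
    s.val.map e = e a ::ₘ Multiset.replicate (s.card - 1) 0 := by
  rw [map_val_eq_cons ha, map_val_eq_replicate, Finset.card_erase_of_mem ha]
  simp only [Finset.mem_erase]
  exact fun x hx => h x hx.2 hx.1

lemma map_val_eq_of_two {a b : α} (ha : a ∈ s) (hb : b ∈ s) (hab : b ≠ a)
    (h : ∀ x ∈ s, x ≠ a → x ≠ b → e x = 0) :
    s.val.map e = e a ::ₘ e b ::ₘ Multiset.replicate (s.card - 2) 0 := by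
  rw [map_val_eq_cons ha, map_val_eq_of_one (Finset.mem_erase.2 ⟨hab, hb⟩),
    Finset.card_erase_of_mem ha, Nat.sub_sub]
  simp only [Finset.mem_erase]
  exact fun x hx hxb => h x hx.2 hx.1 hxb

lemma map_val_eq_of_three {a b c : α} (ha : a ∈ s) (hb : b ∈ s) (hc : c ∈ s) (hab : b ≠ a)
    (hac : c ≠ a) (hbc : c ≠ b) (h : ∀ x ∈ s, x ≠ a → x ≠ b → x ≠ c → e x = 0) :
    s.val.map e = e a ::ₘ e b ::ₘ e c ::ₘ Multiset.replicate (s.card - 3) 0 := by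
  rw [map_val_eq_cons ha, map_val_eq_of_two (Finset.mem_erase.2 ⟨hab, hb⟩)
    (Finset.mem_erase.2 ⟨hac, hc⟩) hbc, Finset.card_erase_of_mem ha, Nat.sub_sub]
  simp only [Finset.mem_erase]
  exact fun x hx hxb hxc => h x hx.2 hx.1 hxb hxc

/-- If no single term accounts for the whole sum `M + 1`, the sum of squares is at most that of
the partition with parts `(M, 1)`. -/
lemma sum_sq_le_of_forall_ne {M : ℕ} (hsum : ∑ x ∈ s, e x = M + 1) (hne : ∀ x ∈ s, e x ≠ M + 1) :
    ∑ x ∈ s, e x ^ 2 ≤ M ^ 2 + 1 := by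
  obtain ⟨b, hb, hpos⟩ := exists_pos_of_sum_pos (s := s) (e := e) (by omega)
  have h1 := Finset.add_sum_erase s e hb
  have h2 := Finset.add_sum_erase s (fun x => e x ^ 2) hb
  have h3 := sum_sq_le_sq_sum (s.erase b) e
  have h4 := hne b hb
  obtain ⟨i, hi⟩ : ∃ i, e b = i + 1 := ⟨e b - 1, by omega⟩
  obtain ⟨j, hj⟩ : ∃ j, ∑ x ∈ s.erase b, e x = j + 1 := ⟨∑ x ∈ s.erase b, e x - 1, by omega⟩
  have hM : M = i + j + 1 := by omega
  simp only [hi] at h2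
  rw [hj] at h3
  rw [← h2, hM]
  nlinarith

lemma exists_eq_one_of_sum_eq_one (h : ∑ x ∈ s, e x = 1) :
    ∃ b ∈ s, e b = 1 ∧ ∀ x ∈ s, x ≠ b → e x = 0 := by
  obtain ⟨b, hb, hpos⟩ := exists_pos_of_sum_pos (s := s) (e := e) (by omega)
  have h1 := Finset.add_sum_erase s e hb
  have h2 : ∑ x ∈ s.erase b, e x = 0 := by omega
  rw [Finset.sum_eq_zero_iff] at h2
  exact ⟨b, hb, by omega, fun x hx hxb => h2 x (Finset.mem_erase.2 ⟨hxb, hx⟩)⟩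

/-- Partitions of `M + 2` whose parts are not `(M + 2)`, `(M + 1, 1)`, `(M, 2)` or `(M, 1, 1)` have
a smaller sum of squares than the last of these, with the exception of `(3, 3)`. -/
lemma partition_cases {M : ℕ} (hM : 1 ≤ M) (hsum : ∑ x ∈ s, e x = M + 2) :
    (∃ a ∈ s, e a = M + 2 ∧ ∀ x ∈ s, x ≠ a → e x = 0) ∨
    (∃ a ∈ s, ∃ b ∈ s, b ≠ a ∧ e a = M + 1 ∧ e b = 1 ∧ ∀ x ∈ s, x ≠ a → x ≠ b → e x = 0) ∨
    (∃ a ∈ s, ∃ b ∈ s, b ≠ a ∧ e a = M ∧ e b = 2 ∧ ∀ x ∈ s, x ≠ a → x ≠ b → e x = 0) ∨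
    (∃ a ∈ s, ∃ b ∈ s, ∃ c ∈ s, b ≠ a ∧ c ≠ a ∧ c ≠ b ∧ e a = M ∧ e b = 1 ∧ e c = 1 ∧
      ∀ x ∈ s, x ≠ a → x ≠ b → x ≠ c → e x = 0) ∨
    ∑ x ∈ s, e x ^ 2 < M ^ 2 + 2 ∨
    (M = 4 ∧ ∑ x ∈ s, e x ^ 2 ≤ 18 ∧ ∀ x ∈ s, e x ≤ 3) := by
  have hne : s.Nonempty := by
    rw [Finset.nonempty_iff_ne_empty]
    rintro rfl
    simp at hsum
  obtain ⟨a, ha, hmax⟩ := s.exists_max_image e hne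
  have h1 := Finset.add_sum_erase s e ha
  obtain ⟨r, hr⟩ : ∃ r, ∑ x ∈ s.erase a, e x = r := ⟨_, rfl⟩
  rcases r with _ | _ | _ | r
  · left
    rw [Finset.sum_eq_zero_iff] at hr
    refine ⟨a, ha, ?_, fun x hx hxa => hr x (Finset.mem_erase.2 ⟨hxa, hx⟩)⟩
    rw [Finset.sum_eq_zero hr] at h1
    omega
  · right; left
    obtain ⟨b, hb, hb1, hz⟩ := exists_eq_one_of_sum_eq_one hr
    rw [Finset.mem_erase] at hb
    exact ⟨a, ha, b, hb.2, hb.1, by omega, hb1,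
      fun x hx hxa hxb => hz x (Finset.mem_erase.2 ⟨hxa, hx⟩) hxb⟩
  · right; right
    obtain ⟨b, hb, hpos⟩ := exists_pos_of_sum_pos (s := s.erase a) (e := e) (by omega)
    have h2 := Finset.add_sum_erase (s.erase a) e hb
    have hb' := Finset.mem_erase.1 hb
    by_cases hb2 : e b = 2
    · left
      have h3 : ∑ x ∈ (s.erase a).erase b, e x = 0 := by omega
      rw [Finset.sum_eq_zero_iff] at h3
      exact ⟨a, ha, b, hb'.2, hb'.1, by omega, hb2, fun x hx hxa hxb =>
        h3 x (Finset.mem_erase.2 ⟨hxb, Finset.mem_erase.2 ⟨hxa, hx⟩⟩)⟩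
    · right; left
      have hb1 : e b = 1 := by
        have : e b ≠ 0 := by omega
        omega
      obtain ⟨c, hc, hc1, hz⟩ := exists_eq_one_of_sum_eq_one
        (show ∑ x ∈ (s.erase a).erase b, e x = 1 by omega)
      simp only [Finset.mem_erase] at hc
      exact ⟨a, ha, b, hb'.2, c, hc.2.2, hb'.1, hc.2.1, hc.1, by omega, hb1, hc1,
        fun x hx hxa hxb hxc =>
          hz x (Finset.mem_erase.2 ⟨hxb, Finset.mem_erase.2 ⟨hxa, hx⟩⟩) hxc⟩
  · right; right; right; right
    have h2 := Finset.add_sum_erase s (fun x => e x ^ 2) ha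
    have h3 := sum_sq_le_sq_sum (s.erase a) e
    have h4 : ∑ x ∈ s, e x ^ 2 ≤ e a * (M + 2) := by
      rw [← hsum, Finset.mul_sum]
      refine Finset.sum_le_sum fun x hx => ?_
      rw [sq]
      exact Nat.mul_le_mul_right _ (hmax x hx)
    simp only [hr] at h3
    have hMr : M = e a + r + 1 := by omega
    by_cases hm : 3 ≤ e a
    · obtain ⟨j, hj⟩ : ∃ j, e a = j + 3 := ⟨e a - 3, by omega⟩
      by_cases hjr : j = 0 ∧ r = 0
      · right
        obtain ⟨rfl, rfl⟩ := hjr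
        refine ⟨by omega, ?_, fun x hx => (hmax x hx).trans hj.le⟩
        simp only [hj] at h2
        omega
      · left
        have hpos : 0 < j + r := by omega
        rw [← h2, hMr]
        simp only [hj]
        nlinarith [Nat.zero_le (j * r)]
    · left
      have : e a ≠ 0 := by
        intro h0
        rw [h0] at h4
        have : ∑ x ∈ s, e x = 0 := Finset.sum_eq_zero fun x hx => by
          have := hmax x hx
          omega
        omega
      have h5 : e a = 1 ∨ e a = 2 := by omega
      rcases h5 with h5 | h5 <;> rw [h5] at h4 hMr <;> subst hMr <;> nlinarith [Nat.zero_le r]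

end Partitions

section BTrees

lemma card_filter_fin_Ico {n a b : ℕ} (h : b ≤ n) :
    (Finset.univ.filter fun x : Fin n => a ≤ x.val ∧ x.val < b).card = b - a := by
  rw [← Nat.card_Ico a b, ← Finset.card_map Fin.valEmbedding]
  congr 1
  ext x
  simp only [Finset.mem_map, Finset.mem_filter, Finset.mem_univ, true_and, Fin.valEmbedding_apply,
    Finset.mem_Ico]
  exact ⟨fun ⟨y, hy, hyx⟩ => hyx ▸ hy, fun hx => ⟨⟨x, by omega⟩, hx, rfl⟩⟩

/-- The parent function of `BTree p q k l`, rooted at `0`. -/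
def bTreeParent (p q k l : ℕ) (h : l + 2 ≤ q) (x : Fin (p + q)) : Fin (p + q) :=
  ⟨if x.val ≤ q then 0 else if x.val ≤ q + k then 2 else
    if x.val ≤ q + k + l then x.val - (q + k) + 2 else 1, by split_ifs <;> omega⟩

variable {p q k l : ℕ} (h : l + 2 ≤ q)

lemma isHeightTwo_bTree : IsHeightTwo (BTree p q k l) ⟨0, by omega⟩ (bTreeParent p q k l h) where
  root := by simp [bTreeParent]
  height x := by
    simp only [bTreeParent, Fin.mk.injEq]
    split_ifs <;> omega
  adj_iff x y := by
    simp only [BTree, SimpleGraph.fromRel_adj, bTreeParent, Fin.ext_iff, ne_eq]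
    split_ifs <;> omega

lemma rootChildren_bTree (hp : 1 ≤ p) :
    rootChildren (⟨0, by omega⟩ : Fin (p + q)) (bTreeParent p q k l h)
      = Finset.univ.filter fun x : Fin (p + q) => 1 ≤ x.val ∧ x.val < q + 1 := by
  ext x
  simp only [rootChildren, bTreeParent, Finset.mem_filter, Finset.mem_univ, true_and, Fin.ext_iff,
    ne_eq]
  grind

lemma card_rootChildren_bTree (hp : 1 ≤ p) :
    (rootChildren (⟨0, by omega⟩ : Fin (p + q)) (bTreeParent p q k l h)).card = q := by
  rw [rootChildren_bTree h hp, card_filter_fin_Ico (by omega)]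
  omega

lemma childCount_bTree (hkl : k + l + 1 ≤ p) {b : Fin (p + q)} (h1 : 1 ≤ b.val) :
    childCount (bTreeParent p q k l h) b = if b.val = 1 then p - 1 - k - l else
      if b.val = 2 then k else if b.val ≤ l + 2 then 1 else 0 := by
  have key : ∀ i j, j ≤ p + q → (∀ x : Fin (p + q), bTreeParent p q k l h x = b ↔
      i ≤ x.val ∧ x.val < j) → childCount (bTreeParent p q k l h) b = j - i := fun i j hj hx => by
    rw [childCount, ← card_filter_fin_Ico (a := i) hj]
    simp only [hx]
  simp only [bTreeParent, Fin.ext_iff] at key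
  split_ifs with hb1 hb2 hb3
  · rw [key (q + k + l + 1) (p + q) le_rfl fun x => by split_ifs <;> omega]
    omega
  · rw [key (q + 1) (q + k + 1) (by omega) fun x => by split_ifs <;> omega]
    omega
  · rw [key (q + k + (b.val - 2)) (q + k + (b.val - 2) + 1) (by omega)
      fun x => by split_ifs <;> omega]
    omega
  · rw [key 0 0 (by omega) fun x => by split_ifs <;> omega]

end BTrees

section Trees

variable {V : Type*} [Fintype V] {G : SimpleGraph V} [DecidableRel G.Adj] {C : Finset V}

lemma SimpleGraph.IsTree.sum_degree_eq (hG : G.IsTree) :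
    ∑ x, G.degree x + 2 = 2 * Fintype.card V := by
  rw [G.sum_degrees_eq_twice_card_edges, ← hG.card_edgeFinset]
  ring

variable [DecidableEq V]

lemma SimpleGraph.IsTree.sum_degree_colorClass (hG : G.IsTree)
    (hC : ∀ ⦃x y⦄, G.Adj x y → (x ∈ C ↔ y ∉ C)) :
    ∑ x ∈ C, G.degree x + 1 = Fintype.card V := by
  rw [← hG.card_edgeFinset, isBipartiteWith_sum_degrees_eq_card_edges (t := Cᶜ)]
  refine ⟨by simpa using disjoint_compl_right, fun x y h => ?_⟩
  have := hC h
  by_cases hx : x ∈ C <;> simp_all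

/-- A vertex adjacent to the whole opposite colour class exhibits a tree as one of height two. -/
lemma SimpleGraph.IsTree.exists_isHeightTwo [Nontrivial V] (hG : G.IsTree)
    (hC : ∀ ⦃x y⦄, G.Adj x y → (x ∈ C ↔ y ∉ C)) {u : V} (hu : u ∈ C)
    (hdeg : G.degree u = Cᶜ.card) :
    ∃ f, IsHeightTwo G u f ∧ rootChildren u f = Cᶜ := by
  have hpos : ∀ x, 1 ≤ G.degree x := fun x =>
    hG.connected.preconnected.degree_pos_of_nontrivial x
  have hnb : G.neighborFinset u = Cᶜ := by
    refine Finset.eq_of_subset_of_card_le (fun y hy => ?_) (by simp [hdeg])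
    rw [mem_neighborFinset] at hy
    simpa using (hC hy).1 hu
  have hone : ∀ x ∈ C, x ≠ u → G.degree x = 1 := by
    have h1 := hG.sum_degree_colorClass hC
    rw [← Finset.add_sum_erase _ _ hu, hdeg, ← Finset.card_add_card_compl C,
      ← Finset.card_erase_add_one hu, Finset.card_eq_sum_ones (C.erase u)] at h1
    have h2 := (Finset.sum_eq_sum_iff_of_le (s := C.erase u) fun x _ => hpos x).1 (by omega)
    exact fun x hx hxu => (h2 x (Finset.mem_erase.2 ⟨hxu, hx⟩)).symm
  have hex : ∀ x, ∃ y, G.Adj x y := fun x => (G.degree_pos_iff_exists_adj x).1 (hpos x)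
  choose n hn using hex
  have hadju : ∀ y, G.Adj u y ↔ y ∉ C := fun y => by
    rw [← mem_neighborFinset, hnb, Finset.mem_compl]
  have hadj : ∀ x ∈ C, x ≠ u → ∀ y, G.Adj x y ↔ n x = y := fun x hx hxu y => by
    refine ⟨fun h => ?_, fun h => h ▸ hn x⟩
    obtain ⟨z, _, hz⟩ := (G.degree_eq_one_iff_existsUnique_adj (v := x)).1 (hone x hx hxu)
    rw [hz _ h, hz _ (hn x)]
  have hnC : ∀ x ∈ C, n x ∉ C := fun x hx => (hC (hn x)).1 hx
  refine ⟨fun x => if x ∈ C ∧ x ≠ u then n x else u, ⟨by simp, fun x => ?_, fun x y => ?_⟩, ?_⟩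
  · have := hnC x
    grind
  · have h1 := hadju x
    have h2 := hadju y
    have h3 := hadj x
    have h4 := hadj y
    have h5 := @hC x y
    have h6 := G.adj_comm x y
    have h7 := hnC x
    have h8 := hnC y
    have h9 : G.Adj x y → x ≠ y := fun h => h.ne
    grind
  · ext x
    have h1 := hnC x
    simp only [rootChildren, Finset.mem_filter, Finset.mem_univ, true_and, Finset.mem_compl]
    grind

lemma SimpleGraph.IsTree.sum_childCount (hG : G.IsTree) {u : V} {f : V → V}
    (hf : IsHeightTwo G u f) :
    (rootChildren u f).card + ∑ b ∈ rootChildren u f, childCount f b + 1 = Fintype.card V := by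
  have h1 := hf.spectralMoment_two
  rw [_root_.spectralMoment_two, ← Nat.cast_sum, ← Nat.cast_sum] at h1
  have h2 : ∑ x, G.degree x
      = 2 * ((rootChildren u f).card + ∑ b ∈ rootChildren u f, childCount f b) := by
    exact_mod_cast h1
  have := hG.sum_degree_eq
  omega

/-- In a balanced colour class without a vertex of full degree, the squares of the degrees have a
small sum. -/
lemma SimpleGraph.IsTree.sum_degree_sq_le [Nontrivial V] (hG : G.IsTree)
    (hC : ∀ ⦃x y⦄, G.Adj x y → (x ∈ C ↔ y ∉ C)) {m : ℕ} (hcard : C.card = m + 2)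
    (hV : Fintype.card V = 2 * (m + 2)) (hne : ∀ x ∈ C, G.degree x ≠ m + 2) :
    ∑ x ∈ C, G.degree x ^ 2 ≤ m ^ 2 + 3 * m + 5 := by
  have hpos : ∀ x, 1 ≤ G.degree x := fun x =>
    hG.connected.preconnected.degree_pos_of_nontrivial x
  obtain ⟨e, he⟩ : ∃ e : V → ℕ, ∀ x, G.degree x = e x + 1 :=
    ⟨fun x => G.degree x - 1, fun x => (Nat.sub_add_cancel (hpos x)).symm⟩
  have h1 := hG.sum_degree_colorClass hC
  simp only [he, Finset.sum_add_distrib, Finset.sum_const, hcard, smul_eq_mul, mul_one] at h1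
  have h2 : ∑ x ∈ C, e x = m + 1 := by omega
  have h3 := sum_sq_le_of_forall_ne h2 fun x hx h => hne x hx (by rw [he, h])
  have h4 : ∑ x ∈ C, G.degree x ^ 2 = ∑ x ∈ C, e x ^ 2 + 2 * ∑ x ∈ C, e x + C.card := by
    rw [Finset.card_eq_sum_ones, Finset.mul_sum, ← Finset.sum_add_distrib, ← Finset.sum_add_distrib]
    exact Finset.sum_congr rfl fun x _ => by rw [he]; ring
  rw [h4, h2, hcard]
  linarith

end Trees

section Comparison

lemma SLt_of_spectralMoment_four_lt {V : Type*} [Fintype V] [DecidableEq V] {G H : SimpleGraph V}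
    {C D : Finset V} (hC : ∀ ⦃x y⦄, G.Adj x y → (x ∈ C ↔ y ∉ C))
    (hD : ∀ ⦃x y⦄, H.Adj x y → (x ∈ D ↔ y ∉ D)) (hV : 5 ≤ Fintype.card V)
    (h2 : spectralMoment G 2 = spectralMoment H 2)
    (h4 : spectralMoment G 4 < spectralMoment H 4) : SLt G H := by
  refine ⟨4, by omega, by omega, fun i hi => ?_, h4⟩
  interval_cases i
  · rw [spectralMoment_zero, spectralMoment_zero]
  · rw [spectralMoment_odd hC (by decide), spectralMoment_odd hD (by decide)]
  · exact h2
  · rw [spectralMoment_odd hC (by decide), spectralMoment_odd hD (by decide)]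

lemma SLt_of_spectralMoment_six_lt {V : Type*} [Fintype V] [DecidableEq V] {G H : SimpleGraph V}
    {C D : Finset V} (hC : ∀ ⦃x y⦄, G.Adj x y → (x ∈ C ↔ y ∉ C))
    (hD : ∀ ⦃x y⦄, H.Adj x y → (x ∈ D ↔ y ∉ D)) (hV : 7 ≤ Fintype.card V)
    (h2 : spectralMoment G 2 = spectralMoment H 2)
    (h4 : spectralMoment G 4 = spectralMoment H 4)
    (h6 : spectralMoment G 6 < spectralMoment H 6) : SLt G H := by
  refine ⟨6, by omega, by omega, fun i hi => ?_, h6⟩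
  interval_cases i
  · rw [spectralMoment_zero, spectralMoment_zero]
  · rw [spectralMoment_odd hC (by decide), spectralMoment_odd hD (by decide)]
  · exact h2
  · rw [spectralMoment_odd hC (by decide), spectralMoment_odd hD (by decide)]
  · exact h4
  · rw [spectralMoment_odd hC (by decide), spectralMoment_odd hD (by decide)]

variable {m : ℕ}

lemma sum_childCount_bTree_zero_two {φ : ℕ → ℕ} (hφ : φ 0 = 0) :
    ∑ b ∈ rootChildren (⟨0, by omega⟩ : Fin ((m + 4) + (m + 4)))
      (bTreeParent (m + 4) (m + 4) 0 2 (by omega)),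
      φ (childCount (bTreeParent (m + 4) (m + 4) 0 2 (by omega)) b)
      = φ (m + 1) + 2 * φ 1 := by
  rw [← Finset.sum_subset (s₁ := {⟨1, by omega⟩, ⟨3, by omega⟩, ⟨4, by omega⟩}),
    Finset.sum_insert (by simp), Finset.sum_insert (by simp), Finset.sum_singleton]
  · rw [childCount_bTree _ (by omega) (by simp), childCount_bTree _ (by omega) (by simp),
      childCount_bTree _ (by omega) (by simp)]
    simp
    ring
  · rw [rootChildren_bTree _ (by omega)]
    intro x hx
    simp only [Finset.mem_insert, Finset.mem_singleton, Fin.ext_iff] at hx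
    simp only [Finset.mem_filter, Finset.mem_univ, true_and]
    omega
  · intro x hx hx'
    simp only [rootChildren_bTree _ (show 1 ≤ m + 4 by omega), Finset.mem_filter, Finset.mem_univ,
      true_and] at hx
    simp only [Finset.mem_insert, Finset.mem_singleton, Fin.ext_iff] at hx'
    rw [childCount_bTree _ (by omega) hx.1, if_neg (by omega)]
    split_ifs
    · exact hφ
    · omega
    · exact hφ

lemma spectralMoment_two_bTree : spectralMoment (BTree (m + 4) (m + 4) 0 2) 2
    = 4 * m + 14 := by
  have h1 := sum_childCount_bTree_zero_two (m := m) (φ := fun x => x) rfl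
  rw [(isHeightTwo_bTree (by omega)).spectralMoment_two, card_rootChildren_bTree _ (by omega),
    ← Nat.cast_sum, h1]
  push_cast
  ring

lemma spectralMoment_four_bTree : spectralMoment (BTree (m + 4) (m + 4) 0 2) 4
    = 2 * ((m + 4) ^ 2 + 2 * (m + 3) + ((m + 1) ^ 2 + 2)) := by
  have h1 := sum_childCount_bTree_zero_two (m := m) (φ := fun x => x) rfl
  have h2 := sum_childCount_bTree_zero_two (m := m) (φ := fun x => x ^ 2) rfl
  rw [(isHeightTwo_bTree (by omega)).spectralMoment_four, card_rootChildren_bTree _ (by omega),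
    ← Nat.cast_sum, h1]
  simp only [← Nat.cast_pow]
  rw [← Nat.cast_sum, h2]
  push_cast
  ring

lemma spectralMoment_six_bTree : spectralMoment (BTree (m + 4) (m + 4) 0 2) 6
    = 2 * ((m + 4) ^ 3 + 3 * (m + 4) * (m + 3) + 3 * ((m + 1) ^ 2 + 2) + ((m + 1) ^ 3 + 2)) := by
  have h1 := sum_childCount_bTree_zero_two (m := m) (φ := fun x => x) rfl
  have h2 := sum_childCount_bTree_zero_two (m := m) (φ := fun x => x ^ 2) rfl
  have h3 := sum_childCount_bTree_zero_two (m := m) (φ := fun x => x ^ 3) rfl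
  rw [(isHeightTwo_bTree (by omega)).spectralMoment_six, card_rootChildren_bTree _ (by omega),
    ← Nat.cast_sum, h1]
  simp only [← Nat.cast_pow]
  rw [← Nat.cast_sum, ← Nat.cast_sum, h2, h3]
  push_cast
  ring

lemma IsHeightTwo.SLt_bTree {T : SimpleGraph (Fin ((m + 4) + (m + 4)))}
    {u : Fin ((m + 4) + (m + 4))}
    {f : Fin ((m + 4) + (m + 4)) → Fin ((m + 4) + (m + 4))} (hT : T.IsTree) (hf : IsHeightTwo T u f)
    (hcard : (rootChildren u f).card = m + 4)
    (h0 : ¬ Nonempty (T ≃g BTree (m + 4) (m + 4) 0 0))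
    (h1 : ¬ Nonempty (T ≃g BTree (m + 4) (m + 4) 0 1))
    (h2 : ¬ Nonempty (T ≃g BTree (m + 4) (m + 4) 2 0))
    (h3 : ¬ Nonempty (T ≃g BTree (m + 4) (m + 4) 0 2)) :
    SLt T (BTree (m + 4) (m + 4) 0 2) := by
  classical
  have hB := isHeightTwo_bTree (p := m + 4) (q := m + 4) (k := 0) (l := 2) (by omega)
  have hsum : ∑ b ∈ rootChildren u f, childCount f b = m + 3 := by
    have := hT.sum_childCount hf
    rw [hcard, Fintype.card_fin] at this
    omega
  have hsum' : ∑ b ∈ rootChildren u f, (childCount f b : ℝ) = m + 3 := by exact_mod_cast hsum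
  have hS2 : spectralMoment T 2 = spectralMoment (BTree (m + 4) (m + 4) 0 2) 2 := by
    rw [hf.spectralMoment_two, spectralMoment_two_bTree, hcard, hsum']
    push_cast
    ring
  have hS4 := hf.spectralMoment_four
  have hS6 := hf.spectralMoment_six
  rw [hcard, hsum'] at hS4 hS6
  push_cast at hS4 hS6
  have hmem : ∀ {k l : ℕ} (h : l + 2 ≤ m + 4) (i : ℕ) (hi : 1 ≤ i ∧ i < m + 5),
      (⟨i, by omega⟩ : Fin ((m + 4) + (m + 4))) ∈ rootChildren (⟨0, by omega⟩ : Fin _)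
        (bTreeParent (m + 4) (m + 4) k l h) := fun h i hi => by
    rw [rootChildren_bTree h (by omega)]
    simp only [Finset.mem_filter, Finset.mem_univ, true_and]
    omega
  have hzero : ∀ {k l : ℕ} (h : l + 2 ≤ m + 4), k + l + 1 ≤ m + 4 → ∀ x ∈
      rootChildren (⟨0, by omega⟩ : Fin _) (bTreeParent (m + 4) (m + 4) k l h),
      x.val ≠ 1 → (x.val = 2 → k = 0) → (3 ≤ x.val → l + 2 < x.val) →
        childCount (bTreeParent (m + 4) (m + 4) k l h) x = 0 :=
    fun h hkl x hx hx1 hx2 hx3 => by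
      simp only [rootChildren_bTree _ (show 1 ≤ m + 4 by omega), Finset.mem_filter,
        Finset.mem_univ, true_and] at hx
      rw [childCount_bTree h hkl hx.1, if_neg hx1]
      split_ifs <;> omega
  rcases partition_cases (show 1 ≤ m + 1 by omega) hsum with
    ⟨a, ha, ea, hz⟩ | ⟨a, ha, b, hb, hba, ea, eb, hz⟩ | ⟨a, ha, b, hb, hba, ea, eb, hz⟩ |
    ⟨a, ha, b, hb, c, hc, hba, hca, hcb, ea, eb, ec, hz⟩ | hlt | ⟨hm, hle, h3⟩
  · refine absurd (hf.nonempty_iso (isHeightTwo_bTree (by omega)) rfl ?_) h0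
    rw [map_val_eq_of_one ha hz, map_val_eq_of_one (hmem _ 1 (by omega)), hcard,
      card_rootChildren_bTree _ (by omega), childCount_bTree _ (by omega) (by simp), ea]
    · simp
    · intro x hx hx1
      rw [ne_eq, Fin.ext_iff] at hx1
      exact hzero _ (by omega) x hx hx1 (by omega) (by omega)
  · refine absurd (hf.nonempty_iso (isHeightTwo_bTree (by omega)) rfl ?_) h1
    rw [map_val_eq_of_two ha hb hba hz,
      map_val_eq_of_two (hmem _ 1 (by omega)) (hmem _ 3 (by omega)) (by simp), hcard,
      card_rootChildren_bTree _ (by omega), childCount_bTree _ (by omega) (by simp),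
      childCount_bTree _ (by omega) (by simp), ea, eb]
    · simp
    · intro x hx hx1 hx2
      rw [ne_eq, Fin.ext_iff] at hx1 hx2
      dsimp only at hx1 hx2
      exact hzero _ (by omega) x hx hx1 (by omega) (by omega)
  · refine absurd (hf.nonempty_iso (isHeightTwo_bTree (by omega)) rfl ?_) h2
    rw [map_val_eq_of_two ha hb hba hz,
      map_val_eq_of_two (hmem _ 1 (by omega)) (hmem _ 2 (by omega)) (by simp), hcard,
      card_rootChildren_bTree _ (by omega), childCount_bTree _ (by omega) (by simp),
      childCount_bTree _ (by omega) (by simp), ea, eb]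
    · simp
    · intro x hx hx1 hx2
      rw [ne_eq, Fin.ext_iff] at hx1 hx2
      dsimp only at hx1 hx2
      exact hzero _ (by omega) x hx hx1 (by omega) (by omega)
  · refine absurd (hf.nonempty_iso (isHeightTwo_bTree (by omega)) rfl ?_) h3
    rw [map_val_eq_of_three ha hb hc hba hca hcb hz,
      map_val_eq_of_three (hmem _ 1 (by omega)) (hmem _ 3 (by omega)) (hmem _ 4 (by omega))
        (by simp) (by simp) (by simp), hcard,
      card_rootChildren_bTree _ (by omega), childCount_bTree _ (by omega) (by simp),
      childCount_bTree _ (by omega) (by simp), childCount_bTree _ (by omega) (by simp), ea, eb, ec]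
    · simp
    · intro x hx hx1 hx2 hx3
      rw [ne_eq, Fin.ext_iff] at hx1 hx2 hx3
      dsimp only at hx1 hx2 hx3
      exact hzero _ (by omega) x hx hx1 (by omega) (by omega)
  · refine SLt_of_spectralMoment_four_lt hf.mem_rootChildren_iff hB.mem_rootChildren_iff
      (by rw [Fintype.card_fin]; omega) hS2 ?_
    have hlt' : ∑ b ∈ rootChildren u f, (childCount f b : ℝ) ^ 2 < (m + 1) ^ 2 + 2 := by
      exact_mod_cast hlt
    rw [hS4, spectralMoment_four_bTree]
    linarith
  · obtain rfl : m = 3 := by omega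
    have hle' : ∑ b ∈ rootChildren u f, (childCount f b : ℝ) ^ 2 ≤ 18 := by exact_mod_cast hle
    have hB4 := spectralMoment_four_bTree (m := 3)
    rcases hle'.lt_or_eq with hlt | heq
    · refine SLt_of_spectralMoment_four_lt hf.mem_rootChildren_iff hB.mem_rootChildren_iff
        (by simp) hS2 ?_
      rw [hS4, hB4]
      norm_num
      linarith
    · have hcube : ∑ b ∈ rootChildren u f, (childCount f b : ℝ) ^ 3
          ≤ 3 * ∑ b ∈ rootChildren u f, (childCount f b : ℝ) ^ 2 := by
        rw [Finset.mul_sum]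
        refine Finset.sum_le_sum fun b hb => ?_
        rw [pow_succ']
        have : (childCount f b : ℝ) ≤ 3 := by exact_mod_cast h3 b hb
        exact mul_le_mul_of_nonneg_right this (by positivity)
      refine SLt_of_spectralMoment_six_lt hf.mem_rootChildren_iff hB.mem_rootChildren_iff
        (by simp) hS2 ?_ ?_
      · rw [hS4, hB4, heq]
        norm_num
      · rw [hS6, spectralMoment_six_bTree]
        rw [heq] at hcube ⊢
        norm_num
        linarith

end Comparison

/-- For `p = q ≥ 4` and `n = p + q`, every tree `T ∈ 𝒯_n^{p,q}`
isomorphic to none of `B_{p,q}^{0,0}`, `B_{p,q}^{0,1}`, `B_{p,q}^{2,0}`,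
`B_{p,q}^{0,2}` satisfies `T ≺_s B_{p,q}^{0,2}`: for `p = q ≥ 4` the tree
`B_{p,q}^{0,2}` is the unique fourth last tree in the S-order among `𝒯_n^{p,q}`. -/
theorem stmt_10 (p q : ℕ) (hp : 4 ≤ p) (hpq : p = q)
    (T : SimpleGraph (Fin (p + q))) (hT : TreeBip p q T)
    (h0 : ¬ Nonempty (T ≃g BTree p q 0 0))
    (h1 : ¬ Nonempty (T ≃g BTree p q 0 1))
    (h2 : ¬ Nonempty (T ≃g BTree p q 2 0))
    (h3 : ¬ Nonempty (T ≃g BTree p q 0 2)) :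
    SLt T (BTree p q 0 2) := by
  classical
  subst hpq
  obtain ⟨m, rfl⟩ : ∃ m, p = m + 4 := ⟨p - 4, by omega⟩
  obtain ⟨hTree, A, hA, hcol⟩ := hT
  have : Nontrivial (Fin ((m + 4) + (m + 4))) := Fin.nontrivial_iff_two_le.2 (by omega)
  have hcol' : ∀ ⦃x y⦄, T.Adj x y → (x ∈ Aᶜ ↔ y ∉ Aᶜ) := fun x y h => by
    have := hcol h
    simp only [Finset.mem_compl]
    tauto
  have hA' : Aᶜ.card = m + 4 := by
    rw [Finset.card_compl, Fintype.card_fin]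
    omega
  have hfull : ∀ C : Finset (Fin ((m + 4) + (m + 4))), Cᶜ.card = m + 4 →
      (∀ ⦃x y⦄, T.Adj x y → (x ∈ C ↔ y ∉ C)) → (∃ x ∈ C, T.degree x = m + 4) →
      SLt T (BTree (m + 4) (m + 4) 0 2) := fun C hcard hC ⟨x, hx, hdeg⟩ => by
    obtain ⟨f, hf, hroot⟩ := hTree.exists_isHeightTwo hC hx (hdeg.trans hcard.symm)
    exact hf.SLt_bTree hTree (by rw [hroot, hcard]) h0 h1 h2 h3
  by_cases hx : ∃ x ∈ A, T.degree x = m + 4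
  · exact hfull A hA' hcol hx
  by_cases hx' : ∃ x ∈ Aᶜ, T.degree x = m + 4
  · exact hfull Aᶜ (by rw [compl_compl, hA]) hcol' hx'
  push Not at hx hx'
  have hV : Fintype.card (Fin ((m + 4) + (m + 4))) = 2 * ((m + 2) + 2) := by
    rw [Fintype.card_fin]
    ring
  have hsq := hTree.sum_degree_sq_le hcol hA hV hx
  have hsq' := hTree.sum_degree_sq_le hcol' hA' hV hx'
  have hdeg : ∑ x, (T.degree x : ℝ) = 4 * m + 14 := by
    have := hTree.sum_degree_eq
    rw [hV] at this
    have h : ∑ x, T.degree x = 4 * m + 14 := by omega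
    exact_mod_cast h
  refine SLt_of_spectralMoment_four_lt hcol
    (isHeightTwo_bTree (show 2 + 2 ≤ m + 4 by omega)).mem_rootChildren_iff (by omega) ?_ ?_
  · rw [spectralMoment_two, hdeg, spectralMoment_two_bTree]
  · have htotal : ∑ x, (T.degree x : ℝ) ^ 2
        ≤ 2 * ((m + 2 : ℝ) ^ 2 + 3 * (m + 2) + 5) := by
      have h : ∑ x, T.degree x ^ 2 ≤ 2 * ((m + 2) ^ 2 + 3 * (m + 2) + 5) := by
        rw [← Finset.sum_add_sum_compl A]
        omega
      exact_mod_cast h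
    rw [hTree.isAcyclic.spectralMoment_four, hdeg, spectralMoment_four_bTree]
    nlinarith
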